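/- Let ⟨ω₁, …, ω_{n+2}⟩ be an (n+2)-web of hypersurfaces on U. If Γ and Γ' are two torsion-free affine connections on U for which this web is geodesic, then Γ and Γ' are projectively equivalent. Hence every (n+2)-web of hypersurfaces determines a unique projective structure on U (the class of projectively equivalent torsion-free connections for which it is geodesic). -/

import Mathlib

open scoped BigOperators

/-- Partial derivative in the `i`-th coordinate direction. -/
noncomputable def pd {n : ℕ} (i : Fin n) (f : (Fin n → ℝ) → ℝ) (x : Fin n → ℝ) : ℝ :=
  fderiv ℝ f x (Pi.single i 1)

/-- A torsion-free affine connection on `U`, given by its Christoffel symbols `Γ k i j`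
(smooth on `U` and symmetric in the lower indices `i j`). -/
def IsTorsionFreeConn {n : ℕ} (U : Set (Fin n → ℝ))
    (Γ : Fin n → Fin n → Fin n → (Fin n → ℝ) → ℝ) : Prop :=
  (∀ k i j, ContDiffOn ℝ (⊤ : ℕ∞) (Γ k i j) U) ∧ (∀ k i j x, Γ k i j x = Γ k j i x)

/-- `γ` is a geodesic of `Γ` on the set `I ⊆ ℝ`, with image in `U`. -/
def IsGeodesicOn {n : ℕ} (U : Set (Fin n → ℝ))
    (Γ : Fin n → Fin n → Fin n → (Fin n → ℝ) → ℝ)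
    (I : Set ℝ) (γ : ℝ → Fin n → ℝ) : Prop :=
  (∀ t ∈ I, γ t ∈ U) ∧ ContDiffOn ℝ 2 γ I ∧
    ∀ t ∈ I, ∀ k, deriv (fun s => deriv (fun u => γ u k) s) t +
      ∑ i, ∑ j, Γ k i j (γ t) * deriv (fun u => γ u i) t * deriv (fun u => γ u j) t = 0

/-- The codimension-one foliation defined by the `1`-form `ω` is totally geodesic for `Γ`:
every geodesic tangent to a leaf at time `0` stays tangent to the kernel of `ω`. -/
def TotallyGeodesic {n : ℕ} (U : Set (Fin n → ℝ))
    (Γ : Fin n → Fin n → Fin n → (Fin n → ℝ) → ℝ)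
    (ω : (Fin n → ℝ) → Fin n → ℝ) : Prop :=
  ∀ I : Set ℝ, IsOpen I → I.OrdConnected → (0 : ℝ) ∈ I →
    ∀ γ : ℝ → Fin n → ℝ, IsGeodesicOn U Γ I γ →
      (∑ k, ω (γ 0) k * deriv (fun u => γ u k) 0) = 0 →
      ∀ t ∈ I, (∑ k, ω (γ t) k * deriv (fun u => γ u k) t) = 0

/-- `ω` is a smooth nonvanishing `1`-form on `U` satisfying the integrability
condition `ω ∧ dω = 0`. -/
def IsFoliationForm {n : ℕ} (U : Set (Fin n → ℝ)) (ω : (Fin n → ℝ) → Fin n → ℝ) : Prop :=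
  ContDiffOn ℝ (⊤ : ℕ∞) ω U ∧ (∀ x ∈ U, ω x ≠ 0) ∧
    ∀ x ∈ U, ∀ i j k,
      ω x i * (pd j (fun y => ω y k) x - pd k (fun y => ω y j) x) +
      ω x j * (pd k (fun y => ω y i) x - pd i (fun y => ω y k) x) +
      ω x k * (pd i (fun y => ω y j) x - pd j (fun y => ω y i) x) = 0

/-- Components of the symmetric covariant differential `d^s_Γ ω`. -/
noncomputable def dsym {n : ℕ} (Γ : Fin n → Fin n → Fin n → (Fin n → ℝ) → ℝ)
    (ω : (Fin n → ℝ) → Fin n → ℝ) (i j : Fin n) (x : Fin n → ℝ) : ℝ :=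
  (pd i (fun y => ω y j) x + pd j (fun y => ω y i) x) / 2 - ∑ k, Γ k i j x * ω x k

/-- Components of the symmetric product `θ·ω` of two `1`-forms. -/
noncomputable def symProd {n : ℕ} (θ ω : (Fin n → ℝ) → Fin n → ℝ) (i j : Fin n) (x : Fin n → ℝ) : ℝ :=
  (θ x i * ω x j + θ x j * ω x i) / 2

/-- A `d`-web of hypersurfaces on `U`: a family of smooth nonvanishing integrable `1`-forms,
any `n` of which are linearly independent at every point of `U`. -/
def IsWeb {n d : ℕ} (U : Set (Fin n → ℝ)) (ωs : Fin d → (Fin n → ℝ) → Fin n → ℝ) : Prop :=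
  (∀ i, IsFoliationForm U (ωs i)) ∧
    ∀ x ∈ U, ∀ σ : Fin n → Fin d, Function.Injective σ →
      LinearIndependent ℝ (fun i => ωs (σ i) x)

/-- `Γ` and `Γ'` are projectively equivalent on `U`:
`Γ'ᵏᵢⱼ = Γᵏᵢⱼ + δᵏᵢ ρⱼ + δᵏⱼ ρᵢ` for some smooth `1`-form `ρ`. -/
def ProjEquiv {n : ℕ} (U : Set (Fin n → ℝ))
    (Γ Γ' : Fin n → Fin n → Fin n → (Fin n → ℝ) → ℝ) : Prop :=
  ∃ ρ : (Fin n → ℝ) → Fin n → ℝ, ContDiffOn ℝ (⊤ : ℕ∞) ρ U ∧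
    ∀ x ∈ U, ∀ k i j, Γ' k i j x =
      Γ k i j x + (if k = i then ρ x j else 0) + (if k = j then ρ x i else 0)

/-- `X` is the frame of vector fields dual to the coframe `ωs` on `U`. -/
def IsDualFrame {n : ℕ} (U : Set (Fin n → ℝ)) (ωs : Fin n → (Fin n → ℝ) → Fin n → ℝ)
    (X : Fin n → (Fin n → ℝ) → Fin n → ℝ) : Prop :=
  (∀ i, ContDiffOn ℝ (⊤ : ℕ∞) (X i) U) ∧
    ∀ x ∈ U, ∀ i j, (∑ k, ωs i x k * X j x k) = if i = j then 1 else 0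

/-- The web invariants `s^a_{ij} = (1/(aᵢ−aⱼ))·(aᵢ ∂ⱼ − aⱼ ∂ᵢ) log (aⱼ/aᵢ)`, where `∂ᵢ`
is derivation along the frame vector field `X i`. -/
noncomputable def sInv {n : ℕ} (X : Fin n → (Fin n → ℝ) → Fin n → ℝ)
    (a : Fin n → (Fin n → ℝ) → ℝ) (i j : Fin n) (x : Fin n → ℝ) : ℝ :=
  (1 / (a i x - a j x)) *
    (a i x * (fderiv ℝ (a j) x (X j x) / a j x - fderiv ℝ (a i) x (X j x) / a i x) -
     a j x * (fderiv ℝ (a j) x (X i x) / a j x - fderiv ℝ (a i) x (X i x) / a i x))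

/-- The curvature tensor `Rᵏₗᵢⱼ` of the connection `Γ`. -/
noncomputable def curv {n : ℕ} (Γ : Fin n → Fin n → Fin n → (Fin n → ℝ) → ℝ)
    (k l i j : Fin n) (x : Fin n → ℝ) : ℝ :=
  pd i (Γ k j l) x - pd j (Γ k i l) x +
    ∑ m, (Γ k i m x * Γ m j l x - Γ k j m x * Γ m i l x)

/-- A geodesic with prescribed initial position and velocity exists for a short time. -/
theorem IsTorsionFreeConn.exists_isGeodesicOn {n : ℕ} {U : Set (Fin n → ℝ)} (hU : IsOpen U)
    {Γ : Fin n → Fin n → Fin n → (Fin n → ℝ) → ℝ} (hΓ : IsTorsionFreeConn U Γ)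
    {x : Fin n → ℝ} (hx : x ∈ U) (v : Fin n → ℝ) :
    ∃ ε > 0, ∃ γ η : ℝ → Fin n → ℝ, IsGeodesicOn U Γ (Set.Ioo (-ε) ε) γ ∧ γ 0 = x ∧ η 0 = v ∧
      ∀ t ∈ Set.Ioo (-ε) ε, HasDerivAt γ (η t) t ∧
        HasDerivAt η (fun k => -∑ i, ∑ j, Γ k i j (γ t) * η t i * η t j) t := by
  let F : (Fin n → ℝ) × (Fin n → ℝ) → (Fin n → ℝ) × (Fin n → ℝ) := fun p =>
    (p.2, fun k => -∑ i, ∑ j, Γ k i j p.1 * p.2 i * p.2 j)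
  have hF : ∀ p : (Fin n → ℝ) × (Fin n → ℝ), p.1 ∈ U → ContDiffAt ℝ 1 F p := by
    intro p hp
    have hΓp : ∀ k i j, ContDiffAt ℝ 1 (fun p : (Fin n → ℝ) × (Fin n → ℝ) => Γ k i j p.1) p :=
      fun k i j => (((hΓ.1 k i j).contDiffAt (hU.mem_nhds hp)).of_le
        (by exact_mod_cast le_top)).comp p contDiffAt_fst
    have hs : ∀ i, ContDiffAt ℝ 1 (fun p : (Fin n → ℝ) × (Fin n → ℝ) => p.2 i) p :=
      fun i => contDiffAt_pi.1 contDiffAt_snd i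
    refine contDiffAt_snd.prodMk (contDiffAt_pi.2 fun k => ContDiffAt.neg ?_)
    exact ContDiffAt.sum fun i _ => ContDiffAt.sum fun j _ =>
      ((hΓp k i j).mul (hs i)).mul (hs j)
  obtain ⟨α, hα0, δ, hδ, hα⟩ :=
    (hF (x, v) hx).exists_forall_mem_closedBall_exists_eq_forall_mem_Ioo_hasDerivAt₀ 0
  have hcont : ContinuousAt (fun t => (α t).1) 0 :=
    (hα 0 (by simp [hδ])).continuousAt.fst
  obtain ⟨δ', hδ', hmem⟩ := Metric.mem_nhds_iff.1
    (hcont.preimage_mem_nhds (hU.mem_nhds (by simpa [hα0] using hx)))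
  have hd : ∀ t ∈ Set.Ioo (-min δ δ') (min δ δ'), HasDerivAt α (F (α t)) t := fun t ht =>
    hα t ⟨by have := min_le_left δ δ'; linarith [ht.1],
      by have := min_le_left δ δ'; linarith [ht.2]⟩
  have hmem' : ∀ t ∈ Set.Ioo (-min δ δ') (min δ δ'), (α t).1 ∈ U := fun t ht => by
    refine hmem ?_
    rw [Metric.mem_ball, Real.dist_eq, sub_zero]
    exact (abs_lt.2 ht).trans_le (min_le_right _ _)
  have hγ : ∀ t ∈ Set.Ioo (-min δ δ') (min δ δ'),
      HasDerivAt (fun s => (α s).1) (α t).2 t := fun t ht => (hd t ht).fst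
  have hη : ∀ t ∈ Set.Ioo (-min δ δ') (min δ δ'), HasDerivAt (fun s => (α s).2)
      (fun k => -∑ i, ∑ j, Γ k i j (α t).1 * (α t).2 i * (α t).2 j) t :=
    fun t ht => (hd t ht).snd
  have hγk : ∀ k, ∀ t ∈ Set.Ioo (-min δ δ') (min δ δ'),
      deriv (fun s => (α s).1 k) t = (α t).2 k := fun k t ht =>
    (hasDerivAt_pi.1 (hγ t ht) k).deriv
  refine ⟨min δ δ', lt_min hδ hδ', fun t => (α t).1, fun t => (α t).2, ⟨hmem', ?_, ?_⟩,
    by simp [hα0], by simp [hα0], fun t ht => ⟨hγ t ht, hη t ht⟩⟩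
  · have hα1 : ContDiffOn ℝ 1 α (Set.Ioo (-min δ δ') (min δ δ')) := by
      rw [show (1 : WithTop ℕ∞) = 0 + 1 from rfl, contDiffOn_succ_iff_deriv_of_isOpen isOpen_Ioo]
      refine ⟨fun t ht => (hd t ht).differentiableAt.differentiableWithinAt, by simp, ?_⟩
      refine contDiffOn_zero.2 (ContinuousOn.congr (f := fun t => F (α t)) (fun t ht => ?_)
        fun t ht => (hd t ht).deriv)
      exact (ContinuousAt.comp (g := F) (hF _ (hmem' t ht)).continuousAt
        (hd t ht).continuousAt).continuousWithinAt
    rw [show (2 : WithTop ℕ∞) = 1 + 1 from rfl, contDiffOn_succ_iff_deriv_of_isOpen isOpen_Ioo]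
    exact ⟨fun t ht => (hγ t ht).differentiableAt.differentiableWithinAt, by simp,
      hα1.snd.congr fun t ht => (hγ t ht).deriv⟩
  · intro t ht k
    have hev : (fun s => deriv (fun u => (α u).1 k) s) =ᶠ[nhds t] fun s => (α s).2 k :=
      Filter.eventuallyEq_of_mem (isOpen_Ioo.mem_nhds ht) (hγk k)
    rw [hev.deriv_eq, (hasDerivAt_pi.1 (hη t ht) k).deriv]
    simp only [hγk _ t ht, neg_add_cancel]

/-- The infinitesimal form of total geodesy, evaluated on a vector tangent to the foliation. -/
theorem TotallyGeodesic.sum_fderiv_eq {n : ℕ} {U : Set (Fin n → ℝ)} (hU : IsOpen U)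
    {Γ : Fin n → Fin n → Fin n → (Fin n → ℝ) → ℝ} (hΓ : IsTorsionFreeConn U Γ)
    {ω : (Fin n → ℝ) → Fin n → ℝ} (hω : ContDiffOn ℝ (⊤ : ℕ∞) ω U)
    (hg : TotallyGeodesic U Γ ω) {x : Fin n → ℝ} (hx : x ∈ U) {v : Fin n → ℝ}
    (hv : ∑ k, ω x k * v k = 0) :
    ∑ k, ω x k * ∑ i, ∑ j, Γ k i j x * v i * v j = ∑ k, fderiv ℝ ω x v k * v k := by
  obtain ⟨ε, hε, γ, η, hgeo, rfl, rfl, hd⟩ := hΓ.exists_isGeodesicOn hU hx v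
  have h0 : (0 : ℝ) ∈ Set.Ioo (-ε) ε := by simp [hε]
  have hγk : ∀ t ∈ Set.Ioo (-ε) ε, ∀ k, deriv (fun u => γ u k) t = η t k := fun t ht k =>
    (hasDerivAt_pi.1 (hd t ht).1 k).deriv
  have hzero := hg _ isOpen_Ioo Set.ordConnected_Ioo h0 γ hgeo (by simpa only [hγk 0 h0] using hv)
  have hωγ : HasDerivAt (fun t => ω (γ t)) (fderiv ℝ ω (γ 0) (η 0)) 0 :=
    (((hω.contDiffAt (hU.mem_nhds hx)).differentiableAt (by simp)).hasFDerivAt).comp_hasDerivAt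
      0 (hd 0 h0).1
  have hsum : HasDerivAt (fun t => ∑ k, ω (γ t) k * η t k)
      (∑ k, (fderiv ℝ ω (γ 0) (η 0) k * η 0 k +
        ω (γ 0) k * -∑ i, ∑ j, Γ k i j (γ 0) * η 0 i * η 0 j)) 0 :=
    HasDerivAt.fun_sum fun k _ =>
      (hasDerivAt_pi.1 hωγ k).mul (hasDerivAt_pi.1 (hd 0 h0).2 k)
  have hconst : (fun t => ∑ k, ω (γ t) k * η t k) =ᶠ[nhds 0] fun _ => 0 :=
    Filter.eventuallyEq_of_mem (isOpen_Ioo.mem_nhds h0) fun t ht => by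
      simpa only [hγk t ht] using hzero t ht
  have h := hsum.deriv.symm.trans (hconst.deriv_eq.trans (deriv_const _ _))
  simp only [Finset.sum_add_distrib, mul_neg, Finset.sum_neg_distrib] at h
  linarith

/-- Two of any `n + 2` covectors in general position may be dropped without enlarging the set
of common zeros. -/
theorem eq_zero_of_forall_ne_dotProduct_eq_zero {n : ℕ} {w : Fin (n + 2) → Fin n → ℝ}
    (hw : ∀ σ : Fin n → Fin (n + 2), Function.Injective σ → LinearIndependent ℝ fun i => w (σ i))
    {a b : Fin (n + 2)} (hab : a ≠ b) {v : Fin n → ℝ}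
    (hv : ∀ c, c ≠ a → c ≠ b → w c ⬝ᵥ v = 0) : v = 0 := by
  have hcard : (({a, b} : Finset (Fin (n + 2)))ᶜ).card = n := by
    rw [Finset.card_compl, Finset.card_pair hab, Fintype.card_fin, Nat.add_sub_cancel]
  let σ := ({a, b} : Finset (Fin (n + 2)))ᶜ.orderEmbOfFin hcard
  have hli : LinearIndependent ℝ (Matrix.of fun i => w (σ i)).row := hw σ σ.injective
  rw [Matrix.linearIndependent_rows_iff_isUnit] at hli
  refine Matrix.mulVec_injective_of_isUnit hli ?_
  rw [Matrix.mulVec_zero]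
  funext i
  have hi := Finset.orderEmbOfFin_mem _ hcard i
  simp only [Finset.mem_compl, Finset.mem_insert, Finset.mem_singleton, not_or] at hi
  exact hv _ hi.1 hi.2

/-- If any `n` of `n + 2` linear forms on `ℝⁿ` have only the zero vector as common zero, then a
symmetric bilinear map preserving all their kernels has the form `m u • v + m v • u`. -/
theorem exists_eq_smul_add_smul_of_preserves_ker {n : ℕ}
    (w : Fin (n + 2) → (Fin n → ℝ) →ₗ[ℝ] ℝ)
    (hw : ∀ a b v, a ≠ b → (∀ c, c ≠ a → c ≠ b → w c v = 0) → v = 0)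
    (B : (Fin n → ℝ) →ₗ[ℝ] (Fin n → ℝ) →ₗ[ℝ] (Fin n → ℝ))
    (hsymm : ∀ u v, B u v = B v u)
    (hB : ∀ a v, w a v = 0 → w a (B v v) = 0) :
    ∃ m : (Fin n → ℝ) →ₗ[ℝ] ℝ, ∀ u v, B u v = m u • v + m v • u := by
  have hpol : ∀ a u v, w a u = 0 → w a v = 0 → w a (B u v) = 0 := by
    intro a u v hu hv
    have h := hB a (u + v) (by simp [hu, hv])
    simp only [map_add, LinearMap.add_apply, hB a u hu, hB a v hv, hsymm v u] at h
    linarith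
  let p : Fin (n + 2) := Fin.natAdd n 0
  let q : Fin (n + 2) := Fin.natAdd n 1
  have hpq : p ≠ q := by simp [p, q]
  have hp : ∀ a : Fin n, Fin.castAdd 2 a ≠ p := fun a h => by
    simp only [p, Fin.ext_iff, Fin.val_castAdd, Fin.val_natAdd] at h; have := a.2; lia
  have hq : ∀ a : Fin n, Fin.castAdd 2 a ≠ q := fun a h => by
    simp only [q, Fin.ext_iff, Fin.val_castAdd, Fin.val_natAdd] at h; have := a.2; lia
  have hcases : ∀ c : Fin (n + 2), (∃ a : Fin n, c = Fin.castAdd 2 a) ∨ c = p ∨ c = q := by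
    intro c
    refine Fin.addCases (fun a => Or.inl ⟨a, rfl⟩) (fun b => Or.inr ?_) c
    fin_cases b <;> simp [p, q]
  let φ : (Fin n → ℝ) →ₗ[ℝ] (Fin n → ℝ) := LinearMap.pi fun a => w (Fin.castAdd 2 a)
  have hφ : Function.Injective φ := by
    refine (injective_iff_map_eq_zero φ).2 fun v hv => hw p q v hpq fun c hcp hcq => ?_
    obtain ⟨a, rfl⟩ := (hcases c).resolve_right (by tauto)
    exact congrFun hv a
  let e := Module.Basis.ofEquivFun (LinearEquiv.ofInjectiveEndo φ hφ)
  have he : ∀ a b, w (Fin.castAdd 2 a) (e b) = if a = b then 1 else 0 := by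
    intro a b
    have h : φ (e b) = Pi.single b 1 := by
      rw [← LinearEquiv.coe_ofInjectiveEndo φ hφ]
      simp [e]
    simpa [φ, Pi.single_apply] using congrFun h a
  have hne : ∀ r s, r ≠ s → (∀ c, (∃ a : Fin n, c = Fin.castAdd 2 a) ∨ c = r ∨ c = s) →
      (∀ a : Fin n, Fin.castAdd 2 a ≠ s) → ∀ a, w r (e a) ≠ 0 := by
    intro r s hrs hc hs a h0
    refine e.ne_zero a (hw (Fin.castAdd 2 a) s _ (hs a) fun c hca hcs => ?_)
    rcases hc c with ⟨b, rfl⟩ | rfl | rfl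
    · rw [he, if_neg]; rintro rfl; exact hca rfl
    · exact h0
    · exact absurd rfl hcs
  have hpe := hne p q hpq hcases hq
  have hdet : ∀ a b, a ≠ b → w p (e a) * w q (e b) - w p (e b) * w q (e a) ≠ 0 := by
    intro a b hab h0
    have hv := hw (Fin.castAdd 2 a) (Fin.castAdd 2 b) (w p (e b) • e a - w p (e a) • e b)
      (by simpa using hab) (fun c hca hcb => by
        rcases hcases c with ⟨d, rfl⟩ | rfl | rfl
        · have h1 : d ≠ a := by rintro rfl; exact hca rfl
          have h2 : d ≠ b := by rintro rfl; exact hcb rfl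
          simp [he, h1, h2]
        · simp; ring
        · simp; linarith)
    have := congrArg (w (Fin.castAdd 2 a)) hv
    simp [he, hab] at this
    exact hpe b this
  have hext : ∀ u v, (∀ c : Fin n, w (Fin.castAdd 2 c) u = w (Fin.castAdd 2 c) v) → u = v :=
    fun u v h => hφ (funext h)
  let m : (Fin n → ℝ) →ₗ[ℝ] ℝ :=
    e.constr ℝ fun a => w (Fin.castAdd 2 a) (B (e a) (e a)) / 2
  have hm : ∀ a, m (e a) = w (Fin.castAdd 2 a) (B (e a) (e a)) / 2 := fun a =>
    e.constr_basis ℝ _ a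
  have hdiag : ∀ a, B (e a) (e a) = (2 * m (e a)) • e a := by
    refine fun a => hext _ _ fun c => ?_
    by_cases hca : c = a
    · subst hca; simp [he, hm]; ring
    · rw [hB _ _ (by simp [he, hca])]; simp [he, hca]
  have hoff : ∀ a b, a ≠ b → B (e a) (e b) = m (e a) • e b + m (e b) • e a := by
    intro a b hab
    set x := w (Fin.castAdd 2 a) (B (e a) (e b)) with hx
    set y := w (Fin.castAdd 2 b) (B (e a) (e b)) with hy
    have hxy : B (e a) (e b) = x • e a + y • e b := by
      refine hext _ _ fun c => ?_
      by_cases hca : c = a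
      · subst hca; simp [he, hab, hx]
      by_cases hcb : c = b
      · subst hcb; simp [he, hca, hy]
      rw [hpol _ _ _ (by simp [he, hca]) (by simp [he, hcb])]
      simp [he, hca, hcb]
    have hrel : ∀ r, w r (e a) ≠ 0 → w r (e b) ≠ 0 →
        w r (e a) * (x - m (e b)) + w r (e b) * (y - m (e a)) = 0 := by
      intro r ha hb
      have h := hB r (w r (e b) • e a - w r (e a) • e b) (by simp; ring)
      simp only [map_sub, map_smul, LinearMap.sub_apply, LinearMap.smul_apply,
        hsymm (e b) (e a), hdiag, hxy, map_add, smul_eq_mul] at h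
      have : (w r (e a) * w r (e b)) *
          (w r (e a) * (x - m (e b)) + w r (e b) * (y - m (e a))) = 0 := by
        linear_combination (-1 / 2) * h
      exact (mul_eq_zero.1 this).resolve_left (mul_ne_zero ha hb)
    have hqe := hne q p hpq.symm (fun c => by have := hcases c; tauto) hp
    have h1 := hrel p (hpe a) (hpe b)
    have h2 := hrel q (hqe a) (hqe b)
    have hd := hdet a b hab
    have hx' : x = m (e b) := by
      have : (w p (e a) * w q (e b) - w p (e b) * w q (e a)) * (x - m (e b)) = 0 := by
        linear_combination w q (e b) * h1 - w p (e b) * h2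
      exact sub_eq_zero.1 ((mul_eq_zero.1 this).resolve_left hd)
    have hy' : y = m (e a) := by
      have : (w p (e a) * w q (e b) - w p (e b) * w q (e a)) * (y - m (e a)) = 0 := by
        linear_combination w p (e a) * h2 - w q (e a) * h1
      exact sub_eq_zero.1 ((mul_eq_zero.1 this).resolve_left hd)
    rw [hxy, hx', hy', add_comm]
  have hBm : B = (LinearMap.lsmul ℝ (Fin n → ℝ)).comp m +
      ((LinearMap.lsmul ℝ (Fin n → ℝ)).comp m).flip := by
    refine e.ext fun a => e.ext fun b => ?_
    by_cases hab : a = b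
    · subst hab; simp [hdiag, two_mul, add_smul]
    · simp [hoff a b hab]
  exact ⟨m, fun u v => by rw [hBm]; simp⟩

/-- any two torsion-free connections for which a given `(n+2)`-web of
hypersurfaces is geodesic are projectively equivalent; hence an `(n+2)`-web determines a
unique projective structure on `U`. -/
theorem statement9 {n : ℕ} (hn : 2 ≤ n) (U : Set (Fin n → ℝ)) (hU : IsOpen U)
    (hUconn : IsConnected U)
    (ωs : Fin (n + 2) → (Fin n → ℝ) → Fin n → ℝ) (hweb : IsWeb U ωs)
    (Γ Γ' : Fin n → Fin n → Fin n → (Fin n → ℝ) → ℝ)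
    (hΓ : IsTorsionFreeConn U Γ) (hΓ' : IsTorsionFreeConn U Γ')
    (hg : ∀ i, TotallyGeodesic U Γ (ωs i)) (hg' : ∀ i, TotallyGeodesic U Γ' (ωs i)) :
    ProjEquiv U Γ Γ' := by
  refine ⟨fun x j => (∑ k, (Γ' k k j x - Γ k k j x)) / (n + 1), ?_, fun x hx k i j => ?_⟩
  · exact contDiffOn_pi.2 fun j => (ContDiffOn.sum fun k _ =>
      (hΓ'.1 k k j).sub (hΓ.1 k k j)).div_const _
  let D : Fin n → Fin n → Fin n → ℝ := fun k i j => Γ' k i j x - Γ k i j x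
  have hD : ∀ k i j, D k i j = Γ' k i j x - Γ k i j x := fun _ _ _ => rfl
  let B : (Fin n → ℝ) →ₗ[ℝ] (Fin n → ℝ) →ₗ[ℝ] (Fin n → ℝ) :=
    LinearMap.mk₂ ℝ (fun u v k => ∑ i, ∑ j, D k i j * u i * v j)
      (fun u u' v => by
        funext k; simp only [Pi.add_apply, ← Finset.sum_add_distrib]
        exact Finset.sum_congr rfl fun i _ => Finset.sum_congr rfl fun j _ => by ring)
      (fun c u v => by
        funext k; simp only [Pi.smul_apply, smul_eq_mul, Finset.mul_sum]
        exact Finset.sum_congr rfl fun i _ => Finset.sum_congr rfl fun j _ => by ring)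
      (fun u v v' => by
        funext k; simp only [Pi.add_apply, ← Finset.sum_add_distrib]
        exact Finset.sum_congr rfl fun i _ => Finset.sum_congr rfl fun j _ => by ring)
      (fun c u v => by
        funext k; simp only [Pi.smul_apply, smul_eq_mul, Finset.mul_sum]
        exact Finset.sum_congr rfl fun i _ => Finset.sum_congr rfl fun j _ => by ring)
  have hBapp : ∀ u v k, B u v k = ∑ i, ∑ j, D k i j * u i * v j := fun _ _ _ => rfl
  obtain ⟨m, hm⟩ := exists_eq_smul_add_smul_of_preserves_ker
    (fun a => dotProductBilin ℝ ℝ (ωs a x))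
    (fun a b v hab hv => eq_zero_of_forall_ne_dotProduct_eq_zero (hweb.2 x hx) hab hv) B
    (fun u v => by
      funext k
      rw [hBapp, hBapp, Finset.sum_comm]
      refine Finset.sum_congr rfl fun i _ => Finset.sum_congr rfl fun j _ => ?_
      rw [hD, hD, hΓ.2 k j i, hΓ'.2 k j i]; ring)
    (fun a v hv => by
      have h := (hg a).sum_fderiv_eq hU hΓ (hweb.1 a).1 hx hv
      have h' := (hg' a).sum_fderiv_eq hU hΓ' (hweb.1 a).1 hx hv
      change ∑ k, ωs a x k * B v v k = 0
      simp only [hBapp, hD, sub_mul, Finset.sum_sub_distrib, mul_sub, h, h', sub_self])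
  have hcoord : ∀ k i j, D k i j = (if k = i then m (Pi.single j 1) else 0) +
      (if k = j then m (Pi.single i 1) else 0) := by
    intro k i j
    have h := congrFun (hm (Pi.single i 1) (Pi.single j 1)) k
    rw [hBapp] at h
    simp [Pi.single_apply] at h
    rw [h, add_comm]
  have htrace : ∀ l, (∑ k, D k k l) / (n + 1) = m (Pi.single l 1) := by
    intro l
    have hn1 : (n : ℝ) + 1 ≠ 0 := by positivity
    simp only [hcoord, Finset.sum_add_distrib]
    simp
    field_simp
  have h := hcoord k i j
  simp only [← htrace, hD] at h
  linarith
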